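/- Let c > 0, T ∈ (0,∞], and let λ : [0,T) → ℝ be C² with λ(0) = 0, λ′(0) = 1/2, and λ′(t) > 0, λ″(t) > 0, and λ′(t)³/λ″(t) ≥ c²/2 for all t ∈ [0,T). Assume moreover λ′(t) < ∞ and define s(t) = c² − c²/(4·λ′(t)²), which is the unique solution of λ_c′(s(t)) = λ′(t) for λ_c(u) = c² − c√(c²−u). Then s is differentiable with s′(t) = c²·λ″(t)/(2·λ′(t)³) ≤ 1 for all t ∈ [0,T). -/

import Mathlib

/-!
The value `s(t)` satisfies `c² - s(t) = (c / (2 λ'(t)))²`, so `λ_c'(u) = c / (2 √(c² - u))` takes the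
value `λ'(t)` at `u = s(t)`. The formula for the derivative of `s` is the quotient rule, and the bound
by `1` is the curvature inequality `λ'³/λ'' ≥ c²/2` after clearing the positive denominators.
-/

/-- The domain `[0,T)` of a driving function, for `T ∈ (0,∞]`. -/
def drivingDomain (T : EReal) : Set ℝ := {t : ℝ | 0 ≤ t ∧ (t : EReal) < T}

/-- Case 2 of Lemma 5.2 (the time-change lemma): let `λ` be `C²` on `[0,T)` with
`λ(0) = 0`, `λ'(0) = 1/2`, `λ' > 0`, `λ'' > 0`, and Loewner curvature
`λ'³/λ'' ≥ c²/2`.  With `λ_c(u) = c² - c √(c² - u)` (the driving function of the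
normalized curve `γ^c`), the time change `s(t) = c² - c²/(4 λ'(t)²)` solves
`λ_c'(s(t)) = λ'(t)`, and is differentiable with
`s'(t) = c² λ''(t) / (2 λ'(t)³) ≤ 1`. -/
theorem time_change_le_one
    (c : ℝ) (hc : 0 < c) (T : EReal) (hT : 0 < T) (l : ℝ → ℝ)
    (hC2 : ContDiffOn ℝ 2 l (drivingDomain T))
    (h0 : l 0 = 0)
    (h'0 : derivWithin l (drivingDomain T) 0 = 1 / 2)
    (hl : ∀ t : ℝ, 0 ≤ t → (t : EReal) < T →
      0 < derivWithin l (drivingDomain T) t ∧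
      0 < derivWithin (derivWithin l (drivingDomain T)) (drivingDomain T) t ∧
      (derivWithin l (drivingDomain T) t) ^ 3
          / derivWithin (derivWithin l (drivingDomain T)) (drivingDomain T) t
        ≥ c ^ 2 / 2) :
    ∀ t : ℝ, 0 ≤ t → (t : EReal) < T →
      deriv (fun u : ℝ => c ^ 2 - c * Real.sqrt (c ^ 2 - u))
          (c ^ 2 - c ^ 2 / (4 * (derivWithin l (drivingDomain T) t) ^ 2))
        = derivWithin l (drivingDomain T) t ∧
      HasDerivWithinAt
        (fun u : ℝ => c ^ 2 - c ^ 2 / (4 * (derivWithin l (drivingDomain T) u) ^ 2))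
        (c ^ 2 * derivWithin (derivWithin l (drivingDomain T)) (drivingDomain T) t
          / (2 * (derivWithin l (drivingDomain T) t) ^ 3))
        (drivingDomain T) t ∧
      c ^ 2 * derivWithin (derivWithin l (drivingDomain T)) (drivingDomain T) t
          / (2 * (derivWithin l (drivingDomain T) t) ^ 3) ≤ 1 := by
  intro t ht htT
  obtain ⟨hL, hM, hcurv⟩ := hl t ht htT
  -- A nonzero `derivWithin` is not a junk value, so positivity of the second
  -- derivative already gives differentiability of the first.
  have hd := (differentiableWithinAt_of_derivWithin_ne_zero hM.ne').hasDerivWithinAt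
  set f := derivWithin l (drivingDomain T) with hf
  set M := derivWithin f (drivingDomain T) t with hMdef
  refine ⟨?_, ?_, ?_⟩
  · have hsq : c ^ 2 - (c ^ 2 - c ^ 2 / (4 * f t ^ 2)) = (c / (2 * f t)) ^ 2 := by
      field_simp
      ring
    have hpos : 0 < c / (2 * f t) := by positivity
    have hne : c ^ 2 - (c ^ 2 - c ^ 2 / (4 * f t ^ 2)) ≠ 0 := by
      rw [hsq]
      positivity
    have h := ((((hasDerivAt_id (c ^ 2 - c ^ 2 / (4 * f t ^ 2))).const_sub (c ^ 2)).sqrt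
      hne).const_mul c).const_sub (c ^ 2)
    refine h.deriv.trans ?_
    simp only [id_eq]
    rw [hsq, Real.sqrt_sq hpos.le]
    field_simp
  · have hne : 4 * f t ^ 2 ≠ 0 := by positivity
    have h := (((hasDerivWithinAt_const t (drivingDomain T) (c ^ 2)).div
      ((hd.pow 2).const_mul 4) hne).const_sub (c ^ 2))
    refine h.congr_deriv ?_
    simp only [Pi.pow_apply]
    field_simp
    ring
  · rw [ge_iff_le, le_div_iff₀ hM] at hcurv
    rw [div_le_one (by positivity)]
    linarith
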